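/- The only rational points (v,u) ∈ ℚ² on the curve u² = v³ + v² + 2v + 1 are (0, 1) and (0, -1). Consequently, the only rational point (x,y) ∈ ℚ² on y² = x⁴ - 2x³ + x² - x is (0,0), and there is no m ∈ ℚ such that x² + m has irreducible second iterate and reducible third iterate over ℚ. -/

import Mathlib

open Polynomial

/-- The ring of Eisenstein integers `ℤ[ω]`, where `ω ^ 2 = -1 - ω`. -/
abbrev Eisenstein : Type := QuadraticAlgebra ℤ (-1) (-1)

namespace Eisenstein

theorem norm_eq (z : Eisenstein) : z.norm = z.re ^ 2 - z.re * z.im + z.im ^ 2 := by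
  rw [QuadraticAlgebra.norm_def]; ring

theorem norm_nonneg (z : Eisenstein) : 0 ≤ z.norm := by
  rw [norm_eq]; nlinarith [sq_nonneg (z.re - z.im), sq_nonneg z.re, sq_nonneg z.im]

theorem norm_eq_zero_iff {z : Eisenstein} : z.norm = 0 ↔ z = 0 := by
  refine ⟨fun h => ?_, fun h => by rw [h, QuadraticAlgebra.norm_zero]⟩
  rw [norm_eq] at h
  have hre : z.re = 0 := by
    nlinarith [sq_nonneg (z.re - 2 * z.im), sq_nonneg z.re]
  have him : z.im = 0 := by
    nlinarith [sq_nonneg (2 * z.re - z.im), sq_nonneg z.im]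
  exact QuadraticAlgebra.ext hre him

theorem norm_pos {z : Eisenstein} (hz : z ≠ 0) : 0 < z.norm :=
  lt_of_le_of_ne (norm_nonneg z) fun h => hz (norm_eq_zero_iff.1 h.symm)

theorem exists_two_mul_sub_mem_Icc (p : ℤ) {n : ℤ} (hn : 0 < n) :
    ∃ k : ℤ, -n ≤ 2 * (p - n * k) ∧ 2 * (p - n * k) ≤ n := by
  refine ⟨(2 * p + n) / (2 * n), ?_⟩
  have h1 := Int.emod_add_mul_ediv (2 * p + n) (2 * n)
  have h2 := Int.emod_nonneg (2 * p + n) (show 2 * n ≠ 0 by positivity)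
  have h3 := Int.emod_lt_of_pos (2 * p + n) (show 0 < 2 * n by positivity)
  constructor <;> linarith

theorem exists_norm_sub_mul_lt (x : Eisenstein) {y : Eisenstein} (hy : y ≠ 0) :
    ∃ q : Eisenstein, (x - y * q).norm < y.norm := by
  have hn := norm_pos hy
  obtain ⟨k, hk⟩ := exists_two_mul_sub_mem_Icc (x * star y).re hn
  obtain ⟨l, hl⟩ := exists_two_mul_sub_mem_Icc (x * star y).im hn
  refine ⟨⟨k, l⟩, ?_⟩
  have hmul : (x - y * ⟨k, l⟩) * star y = x * star y - (y.norm : Eisenstein) * ⟨k, l⟩ := by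
    have := QuadraticAlgebra.algebraMap_norm_eq_mul_star y
    simp only [eq_intCast] at this
    rw [this]; ring
  have hnorm := congrArg QuadraticAlgebra.norm hmul
  rw [map_mul, QuadraticAlgebra.norm_star] at hnorm
  rw [norm_eq (x * star y - _)] at hnorm
  simp only [QuadraticAlgebra.re_sub, QuadraticAlgebra.im_sub, QuadraticAlgebra.re_mul,
    QuadraticAlgebra.im_mul, QuadraticAlgebra.re_intCast, QuadraticAlgebra.im_intCast] at hnorm hk hl
  simp only [zero_mul, mul_zero, add_zero, Int.cast_id] at hnorm
  generalize x.re * (star y).re + -1 * x.im * (star y).im - y.norm * k = e at *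
  generalize x.re * (star y).im + x.im * (star y).re + -1 * x.im * (star y).im - y.norm * l = f at *
  generalize y.norm = n at *
  refine lt_of_mul_lt_mul_right (a := n) ?_ hn.le
  rw [hnorm]
  have hee : 4 * e ^ 2 ≤ n ^ 2 := by nlinarith
  have hff : 4 * f ^ 2 ≤ n ^ 2 := by nlinarith
  have hef : -(4 * e * f) ≤ n ^ 2 := by nlinarith [sq_nonneg (e + f)]
  nlinarith

/-- Division with remainder by rounding both coordinates of the exact quotient. -/
noncomputable instance : EuclideanDomain Eisenstein := by
  classical
  exact
  { (inferInstance : CommRing Eisenstein), (inferInstance : Nontrivial Eisenstein) with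
    quotient := fun x y => if hy : y = 0 then 0 else (exists_norm_sub_mul_lt x hy).choose
    quotient_zero := fun x => by simp
    remainder := fun x y =>
      x - y * if hy : y = 0 then 0 else (exists_norm_sub_mul_lt x hy).choose
    quotient_mul_add_remainder_eq := fun x y => by ring
    r := fun x y => x.norm.natAbs < y.norm.natAbs
    r_wellFounded := (measure fun z : Eisenstein => z.norm.natAbs).wf
    remainder_lt := fun x y hy => by
      rw [dif_neg hy]
      have := (exists_norm_sub_mul_lt x hy).choose_spec
      have := norm_nonneg (x - y * (exists_norm_sub_mul_lt x hy).choose)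
      omega
    mul_left_not_lt := fun x y hy => by
      rw [map_mul, Int.natAbs_mul, not_lt]
      exact Nat.le_mul_of_pos_right _ (Int.natAbs_pos.2 (norm_pos hy).ne') }

/-- Up to a sign, which is a cube, the units are the powers of `ω`. -/
theorem eq_of_isUnit {z : Eisenstein} (hz : IsUnit z) :
    ∃ e : ℤ, e ^ 3 = e ∧ e ^ 2 = 1 ∧ (z = ⟨e, 0⟩ ∨ z = ⟨0, e⟩ ∨ z = ⟨-e, -e⟩) := by
  have h := (Int.isUnit_iff.1 (QuadraticAlgebra.isUnit_iff_norm_isUnit.1 hz)).resolve_right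
    (by have := norm_nonneg z; omega)
  rw [norm_eq] at h
  obtain ⟨x, y⟩ := z
  simp only at h
  have hx : -1 ≤ x ∧ x ≤ 1 := by constructor <;> nlinarith [sq_nonneg (x - 2 * y)]
  have hy : -1 ≤ y ∧ y ≤ 1 := by constructor <;> nlinarith [sq_nonneg (2 * x - y)]
  obtain ⟨hx1, hx2⟩ := hx
  obtain ⟨hy1, hy2⟩ := hy
  interval_cases x <;> interval_cases y <;> simp at h
  · exact ⟨1, by simp⟩
  · exact ⟨-1, by simp⟩
  · exact ⟨-1, by simp⟩
  · exact ⟨1, by simp⟩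
  · exact ⟨1, by simp⟩
  · exact ⟨-1, by simp⟩

end Eisenstein

/-- If `x + y * ω` has norm a cube and is prime to its conjugate, it is a power of `ω` times the
cube of `m + n * ω`. -/
theorem exists_coords_of_norm_eq_cube {x y k : ℤ} (hxy : IsCoprime x y)
    (h3 : ¬ (3 : ℤ) ∣ x ^ 2 - x * y + y ^ 2) (hk : x ^ 2 - x * y + y ^ 2 = k ^ 3) :
    ∃ m n : ℤ, k = m ^ 2 - m * n + n ^ 2 ∧
      ((x = m ^ 3 + n ^ 3 - 3 * m * n ^ 2 ∧ y = 3 * m * n * (m - n)) ∨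
       (x = -(3 * m * n * (m - n)) ∧ y = m ^ 3 + n ^ 3 - 3 * m ^ 2 * n) ∨
       (x = -(m ^ 3 + n ^ 3 - 3 * m ^ 2 * n) ∧ y = -(m ^ 3 + n ^ 3 - 3 * m * n ^ 2))) := by
  obtain ⟨z, hz⟩ : ∃ z : Eisenstein, z = ⟨x, y⟩ := ⟨_, rfl⟩
  have hprod : z * star z = (k : Eisenstein) ^ 3 := by
    rw [← QuadraticAlgebra.algebraMap_norm_eq_mul_star, Eisenstein.norm_eq, hz, hk, eq_intCast,
      Int.cast_pow]
  have hcop : IsCoprime z (star z) := by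
    obtain ⟨a, b, hab⟩ := hxy
    obtain ⟨i, j, hij⟩ := (Int.prime_three.coprime_iff_not_dvd).2 h3
    have hthree : ⟨-1, -2⟩ * ⟨a + b, a⟩ * z + ⟨-1, -2⟩ * ⟨-b, a⟩ * star z = (3 : Eisenstein) := by
      rw [show (3 : Eisenstein) = ⟨3, 0⟩ from rfl]
      ext
      · simp [hz]
        linear_combination 3 * hab
      · simp [hz]
        ring
    have hnorm : z * star z = ((x ^ 2 - x * y + y ^ 2 : ℤ) : Eisenstein) := by
      rw [hprod, hk, Int.cast_pow]
    have hij' := congrArg (Int.cast : ℤ → Eisenstein) hij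
    rw [Int.cast_add, Int.cast_mul, Int.cast_mul, ← hnorm] at hij'
    exact ⟨i * (⟨-1, -2⟩ * ⟨a + b, a⟩) + j * star z, i * (⟨-1, -2⟩ * ⟨-b, a⟩), by
      linear_combination hij' + (i : Eisenstein) * hthree⟩
  obtain ⟨d, u, hd⟩ := exists_associated_pow_of_mul_eq_pow' hcop hprod
  obtain ⟨e, he3, he2, he⟩ := Eisenstein.eq_of_isUnit u.isUnit
  have key : ∃ m n : ℤ, ((x = m ^ 3 + n ^ 3 - 3 * m * n ^ 2 ∧ y = 3 * m * n * (m - n)) ∨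
       (x = -(3 * m * n * (m - n)) ∧ y = m ^ 3 + n ^ 3 - 3 * m ^ 2 * n) ∨
       (x = -(m ^ 3 + n ^ 3 - 3 * m ^ 2 * n) ∧ y = -(m ^ 3 + n ^ 3 - 3 * m * n ^ 2))) := by
    refine ⟨e * d.re, e * d.im, ?_⟩
    have hx := congrArg QuadraticAlgebra.re hd
    have hy := congrArg QuadraticAlgebra.im hd
    rcases he with he | he | he <;>
    simp only [he, hz, pow_succ, pow_zero, one_mul, QuadraticAlgebra.re_mul, QuadraticAlgebra.im_mul] at hx hy
    · left
      constructor
      · rw [← hx]; linear_combination (-(d.re ^ 3 + d.im ^ 3 - 3 * d.re * d.im ^ 2)) * he3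
      · rw [← hy]; linear_combination (-(3 * d.re * d.im * (d.re - d.im))) * he3
    · right; left
      constructor
      · rw [← hx]; linear_combination ((3 * d.re * d.im * (d.re - d.im))) * he3
      · rw [← hy]; linear_combination (-(d.re ^ 3 + d.im ^ 3 - 3 * d.re ^ 2 * d.im)) * he3
    · right; right
      constructor
      · rw [← hx]; linear_combination ((d.re ^ 3 + d.im ^ 3 - 3 * d.re ^ 2 * d.im)) * he3
      · rw [← hy]; linear_combination ((d.re ^ 3 + d.im ^ 3 - 3 * d.re * d.im ^ 2)) * he3
  obtain ⟨m, n, h⟩ := key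
  refine ⟨m, n, ?_, h⟩
  have : k ^ 3 = (m ^ 2 - m * n + n ^ 2) ^ 3 := by
    rw [← hk]
    rcases h with ⟨rfl, rfl⟩ | ⟨rfl, rfl⟩ | ⟨rfl, rfl⟩ <;> ring
  exact (show Odd 3 by decide).strictMono_pow.injective this

/-- The 3-descent on the elliptic curve: a point other than `(0, ± 1)` comes from the cubic
`a ^ 3 + b ^ 3 + 2 * a * b * c = 2 * c ^ 3`. -/
theorem exists_cubic_solution_of_point {v u : ℚ} (hv : v ≠ 0)
    (h : u ^ 2 = v ^ 3 + v ^ 2 + 2 * v + 1) :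
    ∃ a b c : ℤ, IsCoprime a b ∧ c ≠ 0 ∧ a ^ 3 + b ^ 3 + 2 * a * b * c = 2 * c ^ 3 ∧
      (c ^ 2 = v.den ∨ 2 * c ∣ v.num) := by
  have hcop : IsCoprime v.num (v.den : ℤ) := Rat.isCoprime_num_den v
  have hden : (0 : ℤ) < v.den := by exact_mod_cast v.den_pos
  have hnum : v.num ≠ 0 := Rat.num_ne_zero.2 hv
  have hint : ∃ w : ℤ, (v.den : ℤ) * (v.num ^ 3 + v.num ^ 2 * v.den + 2 * v.num * v.den ^ 2 +
      v.den ^ 3) = w ^ 2 := by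
    have hsq : IsSquare (((v.den : ℤ) * (v.num ^ 3 + v.num ^ 2 * v.den + 2 * v.num * v.den ^ 2 +
      v.den ^ 3) : ℤ) : ℚ) := by
      refine ⟨u * v.den ^ 2, ?_⟩
      have hd : (v.den : ℚ) ≠ 0 := by exact_mod_cast v.den_ne_zero
      have hn : (v.num : ℚ) = v * v.den := (Rat.mul_den_eq_num v).symm
      push_cast
      rw [hn]
      linear_combination (-(v.den : ℚ) ^ 4) * h
    obtain ⟨w, hw⟩ := Rat.isSquare_intCast_iff.1 hsq
    exact ⟨w, by rw [hw, sq]⟩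
  obtain ⟨w, hw⟩ := hint
  generalize v.num = p at *
  generalize (v.den : ℤ) = q at *
  have hcopF : IsCoprime q (p ^ 3 + p ^ 2 * q + 2 * p * q ^ 2 + q ^ 3) := by
    have : IsCoprime q (p ^ 3 + q * (p ^ 2 + 2 * p * q + q ^ 2)) :=
      (hcop.symm.pow_right).add_mul_left_right _
    convert this using 1
    ring
  obtain ⟨B, hB⟩ := Int.sq_of_isCoprime hcopF hw
  replace hB : q = B ^ 2 := hB.resolve_right (by nlinarith [sq_nonneg B])
  obtain ⟨C, hC⟩ := Int.sq_of_isCoprime hcopF.symm (by rw [mul_comm]; exact hw)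
  replace hC : p ^ 3 + p ^ 2 * q + 2 * p * q ^ 2 + q ^ 3 = C ^ 2 := by
    rcases hC with hC | hC
    · exact hC
    · have h0 : 0 ≤ p ^ 3 + p ^ 2 * q + 2 * p * q ^ 2 + q ^ 3 :=
        nonneg_of_mul_nonneg_right (hw ▸ sq_nonneg w) hden
      have : C ^ 2 = 0 := by nlinarith [sq_nonneg C]
      rw [hC, this, neg_zero]
  subst hB
  have hB0 : B ≠ 0 := by rintro rfl; simp at hden
  have hpB : IsCoprime p B := (IsCoprime.pow_right_iff two_pos).1 hcop
  have hfac : (C - B * (p + B ^ 2)) * (C + B * (p + B ^ 2)) = p ^ 3 := by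
    linear_combination -hC
  have hprime : ∀ z : ℤ, Prime z → z ∣ p → z ∣ B → False := fun z hz h1 h2 =>
    hz.not_isUnit (hpB.isUnit_of_dvd' h1 h2)
  rcases Int.even_or_odd' p with ⟨p', rfl | rfl⟩
  · have hBodd : Odd B := by
      by_contra hB
      rw [Int.not_odd_iff_even] at hB
      exact hprime 2 Int.prime_two (dvd_mul_right _ _) hB.two_dvd
    have hCodd : Odd C := by
      have : Odd (C ^ 2) := by
        rw [show C ^ 2 = 2 * (4 * p' ^ 3 + 2 * p' ^ 2 * B ^ 2 + 2 * p' * B ^ 4) + B ^ 6 by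
          linear_combination -hC]
        exact (even_two_mul _).add_odd hBodd.pow
      exact (Int.odd_pow' two_ne_zero).1 this
    have main : ∀ g f : ℤ, g * f = p' ^ 3 → ∀ ε : ℤ, ε ^ 2 = 1 → f - 2 * g = ε * B * (2 * p' + B ^ 2) →
        ∃ a b c : ℤ, IsCoprime a b ∧ c ≠ 0 ∧ a ^ 3 + b ^ 3 + 2 * a * b * c = 2 * c ^ 3 ∧
      (c ^ 2 = B ^ 2 ∨ 2 * c ∣ 2 * p') := by
      intro g f hgf ε hε hdiff
      have hgcop : IsCoprime g f := by
        refine isCoprime_of_prime_dvd ?_ fun z hz h1 h2 => ?_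
        · rintro ⟨rfl, rfl⟩
          apply hnum
          rw [zero_mul, eq_comm, pow_eq_zero_iff three_ne_zero] at hgf
          rw [hgf, mul_zero]
        · have h3 : z ∣ p' := hz.dvd_of_dvd_pow (hgf ▸ h1.mul_right f)
          have h4 : z ∣ B ^ 3 := by
            have : B ^ 3 = ε * (f - 2 * g) - 2 * p' * B := by
              rw [hdiff]; linear_combination (-(B * (2 * p' + B ^ 2))) * hε
            rw [this]
            exact dvd_sub (((h2.sub (h1.mul_left 2))).mul_left ε) ((h3.mul_left 2).mul_right B)
          exact hprime z hz (h3.mul_left 2) (hz.dvd_of_dvd_pow h4)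
      obtain ⟨⟨β, rfl⟩, α, rfl⟩ := Int.eq_pow_of_mul_eq_pow_odd hgcop (by decide) hgf
      have hp' : p' = α * β := (show Odd 3 by decide).strictMono_pow.injective
        (show p' ^ 3 = (α * β) ^ 3 by rw [← hgf]; ring)
      subst hp'
      refine ⟨α, -ε * B, β, ?_, ?_, ?_, Or.inr ⟨α, by ring⟩⟩
      · exact IsCoprime.mul_right ⟨0, -ε, by linear_combination hε⟩
          hpB.of_mul_left_right.of_mul_left_left
      · rintro rfl; simp at hnum
      · have hε3 : ε ^ 3 = ε := by linear_combination ε * hε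
        linear_combination hdiff - B ^ 3 * hε3
    have hBp : Odd (B * (2 * p' + B ^ 2)) := hBodd.mul ((even_two_mul _).add_odd hBodd.pow)
    obtain ⟨f₁, hf₁⟩ := (hCodd.sub_odd hBp).two_dvd
    obtain ⟨f₂, hf₂⟩ := (hCodd.add_odd hBp).two_dvd
    have hf : f₁ * f₂ = 2 * p' ^ 3 := by
      rw [hf₁, hf₂] at hfac
      linarith
    rcases Int.prime_two.dvd_or_dvd (Dvd.intro _ hf.symm) with ⟨g, rfl⟩ | ⟨g, rfl⟩
    · exact main g f₂ (by linarith) 1 (by norm_num) (by linarith)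
    · exact main g f₁ (by linarith) (-1) (by norm_num) (by linarith)
  · have hcop2 : IsCoprime (C - B * (2 * p' + 1 + B ^ 2)) (C + B * (2 * p' + 1 + B ^ 2)) := by
      refine isCoprime_of_prime_dvd ?_ fun z hz h1 h2 => ?_
      · rintro ⟨h1, h2⟩
        rw [h1, zero_mul] at hfac
        exact hnum (pow_eq_zero_iff (by norm_num) |>.1 hfac.symm)
      · have h3 : z ∣ 2 * p' + 1 := hz.dvd_of_dvd_pow (hfac ▸ h1.mul_right _)
        have h4 : z ∣ 2 * (B * (2 * p' + 1 + B ^ 2)) := by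
          rw [show 2 * (B * (2 * p' + 1 + B ^ 2)) = (C + B * (2 * p' + 1 + B ^ 2)) -
            (C - B * (2 * p' + 1 + B ^ 2)) by ring]
          exact dvd_sub h2 h1
        rcases hz.dvd_or_dvd h4 with h4 | h4
        · exact hz.not_dvd_one ((Int.dvd_add_right (h4.mul_right p')).1 h3)
        · refine hprime z hz h3 (hz.dvd_of_dvd_pow (n := 3) ?_)
          have : B ^ 3 = B * (2 * p' + 1 + B ^ 2) - (2 * p' + 1) * B := by ring
          rw [this]
          exact dvd_sub h4 (h3.mul_right _)
    obtain ⟨⟨α, hα⟩, β, hβ⟩ := Int.eq_pow_of_mul_eq_pow_odd hcop2 (by decide) hfac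
    have hp : 2 * p' + 1 = α * β := (show Odd 3 by decide).strictMono_pow.injective
        (show (2 * p' + 1) ^ 3 = (α * β) ^ 3 by rw [← hfac, hα, hβ]; ring)
    rw [hα, hβ] at hcop2
    refine ⟨-α, β, B, ?_, hB0, ?_, Or.inl rfl⟩
    · exact ((IsCoprime.pow_iff (by norm_num) (by norm_num)).1 hcop2).neg_left
    · rw [hp] at hα hβ
      linear_combination hα - hβ

theorem two_dvd_of_dvd_norm {x y : ℤ} (h : (2 : ℤ) ∣ x ^ 2 - x * y + y ^ 2) :
    (2 : ℤ) ∣ x ∧ (2 : ℤ) ∣ y := by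
  have key : ∀ x y : ZMod 2, x ^ 2 - x * y + y ^ 2 = 0 → x = 0 ∧ y = 0 := by decide
  have := key x y (by exact_mod_cast (ZMod.intCast_zmod_eq_zero_iff_dvd _ 2).2 (by exact_mod_cast h))
  exact_mod_cast this.imp (ZMod.intCast_zmod_eq_zero_iff_dvd _ 2).1
    (ZMod.intCast_zmod_eq_zero_iff_dvd _ 2).1

theorem twentyThree_dvd_of_dvd_norm {x y : ℤ} (h : (23 : ℤ) ∣ x ^ 2 - x * y + y ^ 2) :
    (23 : ℤ) ∣ x ∧ (23 : ℤ) ∣ y := by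
  have key : ∀ x y : ZMod 23, x ^ 2 - x * y + y ^ 2 = 0 → x = 0 ∧ y = 0 := by decide
  have := key x y (by exact_mod_cast (ZMod.intCast_zmod_eq_zero_iff_dvd _ 23).2 (by exact_mod_cast h))
  exact_mod_cast this.imp (ZMod.intCast_zmod_eq_zero_iff_dvd _ 23).1
    (ZMod.intCast_zmod_eq_zero_iff_dvd _ 23).1

theorem three_dvd_add_of_dvd_norm {x y : ℤ} (h : (3 : ℤ) ∣ x ^ 2 - x * y + y ^ 2) :
    (3 : ℤ) ∣ x + y := by
  refine Int.prime_three.dvd_of_dvd_pow (n := 2) ?_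
  rw [show (x + y) ^ 2 = x ^ 2 - x * y + y ^ 2 + 3 * (x * y) by ring]
  exact dvd_add h (dvd_mul_right _ _)

theorem abs_le_two_mul_of_sq_le {s M : ℤ} (hM : 1 ≤ M) (h : s ^ 2 ≤ 4 * M) : |s| ≤ 2 * M := by
  refine abs_le_of_sq_le_sq ?_ (by positivity)
  nlinarith

/-- The common part of the two descents: `P * N = κ * e ^ 3`, where `N` is the norm of
`x + y * ω` and `κ` is prime to it. -/
theorem exists_coords_of_mul_norm_eq {x y P κ e : ℤ} (hxy : IsCoprime x y)
    (h3 : ¬ (3 : ℤ) ∣ x ^ 2 - x * y + y ^ 2)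
    (hκ0 : κ ≠ 0) (hκ : IsCoprime κ (x ^ 2 - x * y + y ^ 2))
    (hmul : P * (x ^ 2 - x * y + y ^ 2) = κ * e ^ 3)
    (hP : ∀ z : ℤ, Prime z → z ∣ P → z ∣ e → z ∣ x ^ 2 - x * y + y ^ 2 → False) :
    ∃ r m n : ℤ, P = κ * r ^ 3 ∧ e = r * (m ^ 2 - m * n + n ^ 2) ∧
      ((x = m ^ 3 + n ^ 3 - 3 * m * n ^ 2 ∧ y = 3 * m * n * (m - n)) ∨
       (x = -(3 * m * n * (m - n)) ∧ y = m ^ 3 + n ^ 3 - 3 * m ^ 2 * n) ∨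
       (x = -(m ^ 3 + n ^ 3 - 3 * m ^ 2 * n) ∧ y = -(m ^ 3 + n ^ 3 - 3 * m * n ^ 2))) := by
  obtain ⟨P', rfl⟩ : κ ∣ P := hκ.dvd_of_dvd_mul_right (hmul ▸ dvd_mul_right _ _)
  have hN0 : x ^ 2 - x * y + y ^ 2 ≠ 0 := fun h => h3 (h ▸ dvd_zero _)
  have hmul' : P' * (x ^ 2 - x * y + y ^ 2) = e ^ 3 :=
    mul_left_cancel₀ hκ0 (by linarith)
  have hcop : IsCoprime P' (x ^ 2 - x * y + y ^ 2) :=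
    isCoprime_of_prime_dvd (fun h => hN0 h.2) fun z hz h1 h2 =>
      hP z hz (h1.mul_left κ) (hz.dvd_of_dvd_pow (hmul' ▸ h1.mul_right _)) h2
  obtain ⟨⟨r, rfl⟩, k, hk⟩ := Int.eq_pow_of_mul_eq_pow_odd hcop (by decide) hmul'
  obtain ⟨m, n, rfl, h⟩ := exists_coords_of_norm_eq_cube hxy h3 hk
  refine ⟨r, m, n, rfl, (show Odd 3 by decide).strictMono_pow.injective ?_, h⟩
  rw [← hmul', hk]; ring

theorem exists_small_point_of_not_three_dvd {a b c : ℤ} (hab : IsCoprime a b) (h3c : ¬ (3 : ℤ) ∣ c)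
    (h : a ^ 3 + b ^ 3 + 2 * a * b * c = 2 * c ^ 3) :
    ∃ X Y d : ℤ, X ≠ 0 ∧ Y ≠ 0 ∧ d ^ 2 * Y = X ^ 3 + X ^ 2 * Y + 2 * X * Y ^ 2 + Y ^ 3 ∧
      |X| < 2 * |c| ∧ |Y| < c ^ 2 := by
  have hc0 : c ≠ 0 := fun h => h3c (h ▸ dvd_zero _)
  have h3cop : IsCoprime 3 c := Int.prime_three.coprime_iff_not_dvd.2 h3c
  have hprime : ∀ z : ℤ, Prime z → z ∣ 3 * a → z ∣ 3 * b → z ∣ c → False := by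
    intro z hz ha hb hc
    have hz3 : ¬ z ∣ 3 := fun h => hz.not_isUnit (h3cop.isUnit_of_dvd' h hc)
    exact hz.not_isUnit (hab.isUnit_of_dvd' ((hz.dvd_or_dvd ha).resolve_left hz3)
      ((hz.dvd_or_dvd hb).resolve_left hz3))
  obtain ⟨x, hx⟩ : ∃ x, x = 3 * a + 2 * c := ⟨_, rfl⟩
  obtain ⟨y, hy⟩ : ∃ y, y = 3 * b + 2 * c := ⟨_, rfl⟩
  have hprime' : ∀ z : ℤ, Prime z → z ∣ x → z ∣ y → z ∣ c → False := by
    intro z hz h1 h2 h3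
    refine hprime z hz ?_ ?_ h3
    · rw [show 3 * a = x - 2 * c by linarith]
      exact dvd_sub h1 (h3.mul_left 2)
    · rw [show 3 * b = y - 2 * c by linarith]
      exact dvd_sub h2 (h3.mul_left 2)
  have hmul : (x + y - 6 * c) * (x ^ 2 - x * y + y ^ 2) = 46 * c ^ 3 := by
    rw [hx, hy]; linear_combination 27 * h
  have h3 : ¬ (3 : ℤ) ∣ x ^ 2 - x * y + y ^ 2 := by
    intro h'
    have := three_dvd_add_of_dvd_norm h'
    omega
  have h2 : ¬ (2 : ℤ) ∣ x ^ 2 - x * y + y ^ 2 := by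
    intro h'
    have h4 := two_dvd_of_dvd_norm h'
    exact Int.prime_two.not_isUnit (hab.isUnit_of_dvd' (by omega) (by omega))
  have h23 : ¬ (23 : ℤ) ∣ x ^ 2 - x * y + y ^ 2 := by
    intro h'
    obtain ⟨hx', hy'⟩ := twentyThree_dvd_of_dvd_norm h'
    have h23p : Prime (23 : ℤ) := by norm_num
    refine hprime' 23 h23p hx' hy' ?_
    obtain ⟨x', rfl⟩ := hx'
    obtain ⟨y', rfl⟩ := hy'
    have h5 : (23 : ℤ) ∣ 2 * c ^ 3 :=
      ⟨(23 * x' + 23 * y' - 6 * c) * (x' ^ 2 - x' * y' + y' ^ 2), by linarith⟩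
    exact h23p.dvd_of_dvd_pow ((h23p.dvd_or_dvd h5).resolve_left (by norm_num))
  have h46 : IsCoprime 46 (x ^ 2 - x * y + y ^ 2) := by
    rw [show (46 : ℤ) = 2 * 23 by norm_num]
    exact (Int.prime_two.coprime_iff_not_dvd.2 h2).mul_left
      ((show Prime (23 : ℤ) by norm_num).coprime_iff_not_dvd.2 h23)
  have hxy : IsCoprime x y := by
    refine isCoprime_of_prime_dvd ?_ fun z hz h1 h2 => ?_
    · rintro ⟨hx0, hy0⟩
      simp [hx0, hy0] at h3
    · have hN : z ∣ x ^ 2 - x * y + y ^ 2 :=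
        dvd_add (dvd_sub (h1.pow two_ne_zero) (h1.mul_right y)) (h2.pow two_ne_zero)
      have h46c : z ∣ 46 * c ^ 3 := hmul ▸ hN.mul_left _
      refine hprime' z hz h1 h2 (hz.dvd_of_dvd_pow ((hz.dvd_or_dvd h46c).resolve_left ?_))
      exact fun h => hz.not_isUnit (h46.isUnit_of_dvd' h hN)
  obtain ⟨r, m, n, hP, hc, hcoord⟩ := exists_coords_of_mul_norm_eq hxy h3 (by norm_num) h46 hmul (by
    intro z hz h1 h2 hN
    have h4 : z ∣ x + y := by
      rw [show x + y = x + y - 6 * c + 6 * c by ring]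
      exact dvd_add h1 (h2.mul_left 6)
    have h5 : z ∣ 3 * x * y := by
      rw [show 3 * x * y = (x + y) * (x + y) - (x ^ 2 - x * y + y ^ 2) by ring]
      exact dvd_sub (h4.mul_right _) hN
    have hz3 : ¬ z ∣ 3 := fun h => hz.not_isUnit (h3cop.isUnit_of_dvd' h h2)
    refine hz.not_isUnit ?_
    rcases hz.dvd_or_dvd h5 with h6 | h6
    · have h7 := (hz.dvd_or_dvd h6).resolve_left hz3
      exact hxy.isUnit_of_dvd' h7 ((dvd_add_right h7).1 h4)
    · exact hxy.isUnit_of_dvd' ((dvd_add_left h6).1 h4) h6)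
  rcases hcoord with ⟨-, hy'⟩ | ⟨hx', -⟩ | ⟨hx', hy'⟩
  · exact absurd ⟨m * n * (m - n) - b - c, by linarith⟩ (show ¬ (3 : ℤ) ∣ -c by rwa [dvd_neg])
  · exact absurd ⟨-(m * n * (m - n)) - a - c, by linarith⟩ (show ¬ (3 : ℤ) ∣ -c by rwa [dvd_neg])
  obtain ⟨M, hM⟩ : ∃ M, M = m ^ 2 - m * n + n ^ 2 := ⟨_, rfl⟩
  have hr0 : r ≠ 0 := by rintro rfl; simp at hc; exact hc0 hc
  have heq : 3 * M * (m + n + 2 * r) = (m + n) ^ 3 - 46 * r ^ 3 := by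
    rw [hM]; linear_combination -hP + hx' + hy' - 6 * hc
  have h3dvd : (3 : ℤ) ∣ m + n + 2 * r := by
    have key : ∀ s r : ZMod 3, 0 = s ^ 3 - 46 * r ^ 3 → s + 2 * r = 0 := by decide
    have := congrArg (Int.cast : ℤ → ZMod 3) heq
    push_cast at this
    rw [show (3 : ZMod 3) = 0 by decide, zero_mul, zero_mul] at this
    refine (ZMod.intCast_zmod_eq_zero_iff_dvd _ 3).1 ?_
    exact_mod_cast key (m + n) r this
  obtain ⟨Y, hY⟩ := h3dvd
  have hMpos : 1 ≤ M := by
    have : M ≠ 0 := by rintro rfl; rw [← hM, mul_zero] at hc; exact hc0 hc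
    have : 0 ≤ M := by rw [hM]; nlinarith [sq_nonneg (m - n), sq_nonneg (m + n)]
    omega
  have hsM : (m + n) ^ 2 ≤ 4 * M := by rw [hM]; nlinarith [sq_nonneg (m - n)]
  have hM1 : M ≠ 1 := by
    rintro rfl
    have hs := abs_le.1 (abs_le_two_mul_of_sq_le le_rfl hsM)
    have hr2 : r ^ 3 % 2 = r % 2 := by
      rcases Int.emod_two_eq_zero_or_one r with h | h <;> simp [pow_succ, Int.mul_emod, h]
    generalize m + n = s at *
    obtain ⟨hs1, hs2⟩ := hs
    interval_cases s <;> omega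
  have hrpos : 1 ≤ |r| := Int.one_le_abs hr0
  have hcabs : |c| = |r| * M := by rw [hc, ← hM, abs_mul, abs_of_nonneg (by linarith : 0 ≤ M)]
  refine ⟨-2 * r, Y, m - n, mul_ne_zero (by norm_num) hr0, ?_, ?_, ?_, ?_⟩
  · rintro rfl
    rw [show m + n = -2 * r by linarith] at heq
    have : r ^ 3 = 0 := by linarith
    exact hr0 (pow_eq_zero_iff three_ne_zero |>.1 this)
  · have hs : m + n = 3 * Y - 2 * r := by linarith
    have h4 : 4 * M = (m + n) ^ 2 + 3 * (m - n) ^ 2 := by rw [hM]; ring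
    rw [hY, hs] at heq
    rw [hs] at h4
    refine mul_left_cancel₀ (show (27 : ℤ) ≠ 0 by norm_num) ?_
    linear_combination 4 * heq - 9 * Y * h4
  · rw [hcabs, abs_mul, abs_neg, abs_two]
    nlinarith [show 2 ≤ M by omega]
  · have hsabs := abs_le_two_mul_of_sq_le hMpos hsM
    have h3Y : 3 * |Y| ≤ |m + n| + 2 * |r| := by
      have := abs_add_le (m + n) (2 * r)
      rw [hY, abs_mul, abs_mul, abs_two] at this
      simpa using this
    rw [← sq_abs c, hcabs]
    nlinarith [show 2 ≤ M by omega, mul_nonneg (sub_nonneg.2 hMpos) (sub_nonneg.2 hrpos),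
      mul_le_mul hrpos hMpos (by norm_num) (abs_nonneg r)]

theorem nine_dvd_of_three_dvd {a b c : ℤ} (hab : IsCoprime a b) (h3c : (3 : ℤ) ∣ c)
    (h : a ^ 3 + b ^ 3 + 2 * a * b * c = 2 * c ^ 3) : (9 : ℤ) ∣ c := by
  obtain ⟨c', rfl⟩ := h3c
  have key : ∀ a b c : ZMod 9, a ^ 3 + b ^ 3 + 2 * a * b * (3 * c) = 2 * (3 * c) ^ 3 →
      3 * c = 0 ∨ (3 * a = 0 ∧ 3 * b = 0) := by decide +kernel
  have h9 := congrArg (Int.cast : ℤ → ZMod 9) h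
  push_cast at h9
  have hz (t : ℤ) (ht : (3 * t : ZMod 9) = 0) : (9 : ℤ) ∣ 3 * t :=
    (ZMod.intCast_zmod_eq_zero_iff_dvd _ 9).1 (by exact_mod_cast ht)
  rcases key a b c' h9 with hc | ⟨ha, hb⟩
  · exact hz c' hc
  · have := hz a ha
    have := hz b hb
    exact absurd (hab.isUnit_of_dvd' (show (3 : ℤ) ∣ a by omega) (show (3 : ℤ) ∣ b by omega))
      Int.prime_three.not_isUnit

theorem exists_small_point_of_three_dvd {a b c : ℤ} (hab : IsCoprime a b) (h3c : (3 : ℤ) ∣ c) (hc0 : c ≠ 0)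
    (h : a ^ 3 + b ^ 3 + 2 * a * b * c = 2 * c ^ 3) :
    ∃ X Y d : ℤ, X ≠ 0 ∧ Y ≠ 0 ∧ d ^ 2 * Y = X ^ 3 + X ^ 2 * Y + 2 * X * Y ^ 2 + Y ^ 3 ∧
      |X| < 2 * |c| ∧ |Y| < c ^ 2 := by
  obtain ⟨e, rfl⟩ := nine_dvd_of_three_dvd hab h3c h
  have he0 : e ≠ 0 := by rintro rfl; simp at hc0
  have h3ab : (3 : ℤ) ∣ a + b := by
    have key : ∀ a b e : ZMod 3, a ^ 3 + b ^ 3 + 2 * a * b * (9 * e) = 2 * (9 * e) ^ 3 →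
      a + b = 0 := by decide
    have h' := congrArg (Int.cast : ℤ → ZMod 3) h
    push_cast at h'
    refine (ZMod.intCast_zmod_eq_zero_iff_dvd _ 3).1 ?_
    exact_mod_cast key a b e h'
  obtain ⟨g, hg⟩ := h3ab
  obtain ⟨y, hy⟩ : ∃ y, y = g + 4 * e := ⟨_, rfl⟩
  obtain ⟨x, hx⟩ : ∃ x, x = a + 6 * e - y := ⟨_, rfl⟩
  have ha : a = x + y - 6 * e := by linarith
  have hb : b = 2 * y - x - 6 * e := by linarith
  have hprime : ∀ z : ℤ, Prime z → z ∣ x → z ∣ y → z ∣ 6 * e → False := by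
    intro z hz h1 h2 h3
    refine hz.not_isUnit (hab.isUnit_of_dvd' ?_ ?_)
    · rw [ha]
      exact dvd_sub (dvd_add h1 h2) h3
    · rw [hb]
      exact dvd_sub (dvd_sub (h2.mul_left 2) h1) h3
  have hmul : (y - 6 * e) * (x ^ 2 - x * y + y ^ 2) = 138 * e ^ 3 := by
    refine mul_left_cancel₀ (show (9 : ℤ) ≠ 0 by norm_num) ?_
    rw [ha, hb] at h
    linear_combination h
  have h3 : ¬ (3 : ℤ) ∣ x ^ 2 - x * y + y ^ 2 := by
    intro h'
    have := three_dvd_add_of_dvd_norm h'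
    exact Int.prime_three.not_isUnit (hab.isUnit_of_dvd' (by omega) (by omega))
  have h2 : ¬ (2 : ℤ) ∣ x ^ 2 - x * y + y ^ 2 := by
    intro h'
    have h4 := two_dvd_of_dvd_norm h'
    exact hprime 2 Int.prime_two h4.1 h4.2 (by omega)
  have h23 : ¬ (23 : ℤ) ∣ x ^ 2 - x * y + y ^ 2 := by
    intro h'
    obtain ⟨hx', hy'⟩ := twentyThree_dvd_of_dvd_norm h'
    have h23p : Prime (23 : ℤ) := by norm_num
    refine hprime 23 h23p hx' hy' ?_
    obtain ⟨x', hx'⟩ := hx'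
    obtain ⟨y', hy'⟩ := hy'
    rw [hx', hy'] at hmul
    have h5 : (23 : ℤ) ∣ 6 * e ^ 3 :=
      ⟨(23 * y' - 6 * e) * (x' ^ 2 - x' * y' + y' ^ 2), by linarith⟩
    exact (h23p.dvd_of_dvd_pow ((h23p.dvd_or_dvd h5).resolve_left (by norm_num))).mul_left 6
  have h138 : IsCoprime 138 (x ^ 2 - x * y + y ^ 2) := by
    rw [show (138 : ℤ) = 2 * 3 * 23 by norm_num]
    exact ((Int.prime_two.coprime_iff_not_dvd.2 h2).mul_left
      (Int.prime_three.coprime_iff_not_dvd.2 h3)).mul_left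
      ((show Prime (23 : ℤ) by norm_num).coprime_iff_not_dvd.2 h23)
  have hxy : IsCoprime x y := by
    refine isCoprime_of_prime_dvd ?_ fun z hz h1 h2 => ?_
    · rintro ⟨hx0, hy0⟩
      simp [hx0, hy0] at h3
    · have hN : z ∣ x ^ 2 - x * y + y ^ 2 :=
        dvd_add (dvd_sub (h1.pow two_ne_zero) (h1.mul_right y)) (h2.pow two_ne_zero)
      have h138e : z ∣ 138 * e ^ 3 := hmul ▸ hN.mul_left _
      refine hprime z hz h1 h2 ((hz.dvd_of_dvd_pow
        ((hz.dvd_or_dvd h138e).resolve_left ?_)).mul_left 6)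
      exact fun h => hz.not_isUnit (h138.isUnit_of_dvd' h hN)
  obtain ⟨r, m, n, hP, he, hcoord⟩ := exists_coords_of_mul_norm_eq hxy h3 (by norm_num) h138 hmul (by
    intro z hz h1 h2 hN
    have h4 : z ∣ y := by
      rw [show y = y - 6 * e + 6 * e by ring]
      exact dvd_add h1 (h2.mul_left 6)
    have h5 : z ∣ x ^ 2 := by
      rw [show x ^ 2 = (x ^ 2 - x * y + y ^ 2) + y * (x - y) by ring]
      exact dvd_add hN (h4.mul_right _)
    exact hz.not_isUnit (hxy.isUnit_of_dvd' (hz.dvd_of_dvd_pow h5) h4))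
  have h3y : (3 : ℤ) ∣ y := ⟨2 * e + 46 * r ^ 3, by linarith⟩
  have h3x : ¬ (3 : ℤ) ∣ x := fun h3x =>
    Int.prime_three.not_isUnit (hxy.isUnit_of_dvd' h3x h3y)
  rcases hcoord with ⟨-, hy'⟩ | ⟨hx', -⟩ | ⟨hx', hy'⟩
  rotate_left
  · exact absurd ⟨-(m * n * (m - n)), by linarith⟩ h3x
  · refine absurd ?_ h3x
    rw [show x = y + 3 * (m ^ 2 * n - m * n ^ 2) by rw [hx', hy']; ring]
    exact dvd_add h3y (dvd_mul_right _ _)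
  obtain ⟨M, hM⟩ : ∃ M, M = m ^ 2 - m * n + n ^ 2 := ⟨_, rfl⟩
  have hr0 : r ≠ 0 := by rintro rfl; rw [zero_mul] at he; exact he0 he
  have heq : m * n * (m - n) = 2 * r * M + 46 * r ^ 3 := by
    refine mul_left_cancel₀ (show (3 : ℤ) ≠ 0 by norm_num) ?_
    rw [hM]; linear_combination hP - hy' + 6 * he
  have hMpos : 1 ≤ M := by
    have : M ≠ 0 := by rintro rfl; rw [← hM, mul_zero] at he; exact he0 he
    have : 0 ≤ M := by rw [hM]; nlinarith [sq_nonneg (m - n), sq_nonneg (m + n)]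
    omega
  have hDM : (m - n) ^ 2 ≤ 4 * M := by
    rw [hM]; nlinarith [sq_nonneg (m + n), sq_nonneg (m - n)]
  have hrpos : 1 ≤ |r| := Int.one_le_abs hr0
  have heabs : |e| = |r| * M := by rw [he, ← hM, abs_mul, abs_of_nonneg (by linarith : 0 ≤ M)]
  refine ⟨6 * r, m - n - 2 * r, m + n, mul_ne_zero (by norm_num) hr0, ?_, ?_, ?_, ?_⟩
  · intro hD
    have hm : m = n + 2 * r := by linarith
    have : 54 * r ^ 3 = 0 := by
      rw [hM, hm] at heq
      linarith
    exact hr0 (pow_eq_zero_iff three_ne_zero |>.1 (by linarith))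
  · rw [hM] at heq
    linear_combination 4 * heq
  · rw [abs_mul, abs_mul, heabs]
    norm_num
    nlinarith
  · have hDabs := abs_le_two_mul_of_sq_le hMpos hDM
    have hY : |m - n - 2 * r| ≤ |m - n| + 2 * |r| := by
      have := abs_sub (m - n) (2 * r)
      rwa [abs_mul, abs_two] at this
    rw [mul_pow, ← sq_abs e, heabs]
    nlinarith [mul_nonneg (sub_nonneg.2 hMpos) (sub_nonneg.2 hrpos),
      mul_le_mul hrpos hMpos (by norm_num) (abs_nonneg r)]

/-- A nontrivial point of the cubic gives a point `v = X / Y ≠ 0` of the elliptic curve, so small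
that the cubic solution it gives in turn has a smaller last coordinate. -/
theorem exists_small_point {a b c : ℤ} (hab : IsCoprime a b) (hc0 : c ≠ 0)
    (h : a ^ 3 + b ^ 3 + 2 * a * b * c = 2 * c ^ 3) :
    ∃ X Y d : ℤ, X ≠ 0 ∧ Y ≠ 0 ∧ d ^ 2 * Y = X ^ 3 + X ^ 2 * Y + 2 * X * Y ^ 2 + Y ^ 3 ∧
      |X| < 2 * |c| ∧ |Y| < c ^ 2 := by
  by_cases h3c : (3 : ℤ) ∣ c
  · exact exists_small_point_of_three_dvd hab h3c hc0 h
  · exact exists_small_point_of_not_three_dvd hab h3c h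

theorem cubic_eq_zero {a b c : ℤ} (hab : IsCoprime a b)
    (h : a ^ 3 + b ^ 3 + 2 * a * b * c = 2 * c ^ 3) : c = 0 := by
  induction hN : c.natAbs using Nat.strong_induction_on generalizing a b c with
  | _ N ih =>
    by_contra hc0
    obtain ⟨X, Y, d, hX, hY, hXY, hXc, hYc⟩ := exists_small_point hab hc0 h
    have hX' : (X : ℚ) ≠ 0 := by exact_mod_cast hX
    have hY' : (Y : ℚ) ≠ 0 := by exact_mod_cast hY
    have hpoint : ((d : ℚ) / Y) ^ 2 =
        ((X : ℚ) / Y) ^ 3 + ((X : ℚ) / Y) ^ 2 + 2 * ((X : ℚ) / Y) + 1 := by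
      have : (d : ℚ) ^ 2 * Y = X ^ 3 + X ^ 2 * Y + 2 * X * Y ^ 2 + Y ^ 3 := by exact_mod_cast hXY
      field_simp
      linear_combination this
    obtain ⟨a', b', c', hab', hc0', h', hlt⟩ :=
      exists_cubic_solution_of_point (div_ne_zero hX' hY') hpoint
    refine hc0' (ih c'.natAbs ?_ hab' h' rfl)
    rw [← hN, ← Nat.cast_lt (α := ℤ), Int.natCast_natAbs, Int.natCast_natAbs]
    rcases hlt with hlt | hlt
    · rw [← sq_lt_sq, hlt]
      refine (Int.le_of_dvd (abs_pos.2 hY) ?_).trans_lt hYc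
      rw [dvd_abs, ← Rat.divInt_eq_div]
      exact Rat.den_dvd X Y
    · have hdvd : 2 * c' ∣ X := by
        refine hlt.trans ?_
        rw [← Rat.divInt_eq_div]
        exact Rat.num_dvd X hY
      have := Int.le_of_dvd (abs_pos.2 hX) ((abs_dvd_abs _ _).2 hdvd)
      rw [abs_mul, abs_two] at this
      linarith

theorem eq_zero_of_sq_eq {v u : ℚ} (h : u ^ 2 = v ^ 3 + v ^ 2 + 2 * v + 1) : v = 0 := by
  by_contra hv
  obtain ⟨a, b, c, hab, hc, habc, -⟩ := exists_cubic_solution_of_point hv h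
  exact hc (cubic_eq_zero hab habc)

theorem eq_zero_of_sq_eq_quartic {x y : ℚ} (h : y ^ 2 = x ^ 4 - 2 * x ^ 3 + x ^ 2 - x) : x = 0 := by
  by_contra hx
  have h' : (y / x ^ 2) ^ 2 = (-x⁻¹) ^ 3 + (-x⁻¹) ^ 2 + 2 * (-x⁻¹) + 1 := by
    field_simp
    linear_combination h
  exact hx (by simpa using eq_zero_of_sq_eq h')

open IntermediateField in
/-- If `f` is irreducible of even degree and `f ∘ (X ^ 2 + m)` is reducible, then `f(m)` is a
square: it is the norm of `α - m`, a square in `K(α)`, for a root `α` of `f`. -/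
theorem isSquare_eval_of_not_irreducible_comp {K : Type*} [Field K] {f : K[X]} (hf : f.Monic)
    (heven : Even f.natDegree) (hirr : Irreducible f) {m : K}
    (hred : ¬ Irreducible (f.comp (X ^ 2 + C m))) : IsSquare (f.eval m) := by
  by_contra hsq
  refine hred (irreducible_comp hf (monic_X_pow_add_C m two_ne_zero) hirr fun E _ _ α hα => ?_)
  have hint : IsIntegral K α := by
    by_contra hα'
    exact hirr.ne_zero (hα ▸ minpoly.eq_zero hα')
  set g := IntermediateField.AdjoinSimple.gen K α with hg
  have hpoly : (X ^ 2 + C m : K[X]).map (algebraMap K K⟮α⟯) - C g =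
      X ^ 2 - C (g - algebraMap K K⟮α⟯ m) := by
    simp only [Polynomial.map_add, Polynomial.map_pow, map_X, map_C, C_sub]
    ring
  rw [hpoly]
  refine X_pow_sub_C_irreducible_of_prime Nat.prime_two fun s hs => hsq ?_
  have hfin : FiniteDimensional K K⟮α⟯ := IntermediateField.adjoin.finiteDimensional hint
  refine ⟨Algebra.norm K s, ?_⟩
  rw [← sq, ← map_pow, hs]
  have hrank : Module.finrank K K⟮α⟯ = f.natDegree := by
    rw [IntermediateField.adjoin.finrank hint, hα]
  have h1 : Algebra.norm K (g - algebraMap K K⟮α⟯ m) = Algebra.norm K (algebraMap K K⟮α⟯ m - g) := by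
    rw [← neg_sub, ← neg_one_mul, map_mul, show (-1 : K⟮α⟯) = algebraMap K _ (-1) by simp,
      Algebra.norm_algebraMap, hrank, heven.neg_one_pow, one_mul]
  have hgen : (adjoin.powerBasis hint).gen = g := adjoin.powerBasis_gen hint
  rw [h1, Algebra.norm_eq_matrix_det (adjoin.powerBasis hint).basis, map_sub, AlgHom.commutes,
    ← hα, ← minpoly_gen K α, ← hg, ← hgen, ← charpoly_leftMulMatrix, Matrix.eval_charpoly]
  rfl

theorem stmt_19 :
    (∀ v u : ℚ, u ^ 2 = v ^ 3 + v ^ 2 + 2 * v + 1 → (v = 0 ∧ u = 1) ∨ (v = 0 ∧ u = -1)) ∧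
    (∀ x y : ℚ, y ^ 2 = x ^ 4 - 2 * x ^ 3 + x ^ 2 - x → x = 0 ∧ y = 0) ∧
    ¬ ∃ m : ℚ,
      Irreducible ((X ^ 2 + C m).comp (X ^ 2 + C m)) ∧
      ¬ Irreducible (((X ^ 2 + C m).comp (X ^ 2 + C m)).comp (X ^ 2 + C m)) := by
  refine ⟨fun v u h => ?_, fun x y h => ?_, ?_⟩
  · obtain rfl := eq_zero_of_sq_eq h
    rcases sq_eq_one_iff.1 (show u ^ 2 = 1 by linarith) with hu | hu <;> simp [hu]
  · obtain rfl := eq_zero_of_sq_eq_quartic h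
    exact ⟨rfl, by simpa using h⟩
  · rintro ⟨m, hirr, hred⟩
    have hm : (X ^ 2 + C m).Monic := monic_X_pow_add_C m two_ne_zero
    have hdeg : (X ^ 2 + C m).natDegree = 2 := natDegree_X_pow_add_C
    obtain ⟨y, hy⟩ := isSquare_eval_of_not_irreducible_comp (hm.comp hm (by rw [hdeg]; norm_num))
      (by rw [natDegree_comp, hdeg]; decide) hirr hred
    have hm0 : -m = 0 := eq_zero_of_sq_eq_quartic (y := y) (by
      simp at hy
      linear_combination -hy)
    rw [neg_eq_zero] at hm0
    subst hm0
    rw [C_0, add_zero, pow_comp, X_comp, ← pow_mul] at hirr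
    exact (not_irreducible_pow (by norm_num)) hirr
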